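/- Let n ≥ 1, ν > 0, and let h = (h₁,…,hₙ) : ℝⁿ → ℝⁿ be smooth and bounded. If v¹ and v² are two globally bounded, parabolically Hölder continuous classical solutions on [0,∞)×ℝⁿ of the Cauchy problem for the multivariate viscous Burgers system with the same initial data h, then v¹ = v² identically. In other words, the Cauchy problem for the multivariate Burgers equation has at most one globally bounded Hölder continuous classical solution. -/

import Mathlib

open Set

noncomputable section

abbrev E (n : ℕ) := EuclideanSpace ℝ (Fin n)

/-- Partial derivative of `f` in the `j`-th coordinate direction. -/
noncomputable def pd {n : ℕ} (f : E n → ℝ) (j : Fin n) (x : E n) : ℝ :=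
  fderiv ℝ f x (EuclideanSpace.single j 1)

/-- `u` is a classical solution on `[0,∞) × ℝⁿ` of the multivariate viscous Burgers
system `∂uᵢ/∂t = ν Δuᵢ − Σⱼ uⱼ ∂uᵢ/∂xⱼ` with initial data `h`. -/
def IsBurgersSolution (n : ℕ) (ν : ℝ) (h : Fin n → E n → ℝ)
    (u : Fin n → ℝ → E n → ℝ) : Prop :=
  (∀ i, ContinuousOn (fun p : ℝ × E n => u i p.1 p.2) (Ici 0 ×ˢ univ)) ∧
  (∀ i x, ∀ t ∈ Ioi (0:ℝ), DifferentiableAt ℝ (fun s => u i s x) t) ∧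
  (∀ i, ∀ t ∈ Ici (0:ℝ), Differentiable ℝ (u i t) ∧ ∀ j,
    Differentiable ℝ (pd (u i t) j) ∧ Continuous (pd (u i t) j) ∧
    ∀ k, Continuous (pd (pd (u i t) j) k)) ∧
  (∀ i x, ∀ t ∈ Ioi (0:ℝ), deriv (fun s => u i s x) t =
    ν * ∑ j, pd (pd (u i t) j) j x - ∑ j, u j t x * pd (u i t) j x) ∧
  (∀ i x, u i 0 x = h i x)

/-- `u` is globally bounded on `[0,∞) × ℝⁿ`. -/
def GloballyBounded (n : ℕ) (u : Fin n → ℝ → E n → ℝ) : Prop :=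
  ∃ M : ℝ, ∀ i, ∀ t ∈ Ici (0:ℝ), ∀ x, |u i t x| ≤ M

/-- `u` is parabolically Hölder continuous on `[0,∞) × ℝⁿ` with some exponent
`δ ∈ (0,1)`, with respect to the parabolic distance `e(z₁,z₂) = √|t₁−t₂| + ‖x₁−x₂‖`. -/
def ParabolicHolder (n : ℕ) (u : Fin n → ℝ → E n → ℝ) : Prop :=
  ∃ δ ∈ Ioo (0:ℝ) 1, ∃ C : ℝ, ∀ i, ∀ t₁ ∈ Ici (0:ℝ), ∀ t₂ ∈ Ici (0:ℝ), ∀ x₁ x₂,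
    |u i t₁ x₁ - u i t₂ x₂| ≤ C * (Real.sqrt |t₁ - t₂| + ‖x₁ - x₂‖) ^ δ

lemma hasDerivAt_line {n : ℕ} {f : E n → ℝ} (hf : Differentiable ℝ f) (x ξ : E n) (τ : ℝ) :
    HasDerivAt (fun s : ℝ => f (x + s • ξ)) (∑ j, ξ j * pd f j (x + τ • ξ)) τ := by
  have hline : HasDerivAt (fun s : ℝ => x + s • ξ) ξ τ := by
    simpa using ((hasDerivAt_id τ).smul_const ξ).const_add x
  have h := (hf (x + τ • ξ)).hasFDerivAt.comp_hasDerivAt τ hline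
  have hξ : ξ = ∑ j, ξ j • EuclideanSpace.single j (1 : ℝ) := by
    ext k
    simp [Finset.sum_apply, Pi.single_apply]
  have hL : ∀ L : E n →L[ℝ] ℝ, L ξ = ∑ j, ξ j * L (EuclideanSpace.single j 1) := by
    intro L
    conv_lhs => rw [hξ]
    simp only [map_sum, map_smul, smul_eq_mul]
  rw [hL] at h
  exact h

lemma hasDerivAt_line_deriv {n : ℕ} {f : E n → ℝ} (hf : ∀ j, Differentiable ℝ (pd f j))
    (x ξ : E n) :
    HasDerivAt (fun s : ℝ => ∑ j, ξ j * pd f j (x + s • ξ))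
      (∑ j, ∑ k, ξ j * ξ k * pd (pd f j) k x) 0 := by
  have h := HasDerivAt.fun_sum (u := Finset.univ) fun j _ =>
    (hasDerivAt_line (hf j) x ξ 0).const_mul (ξ j)
  simpa only [Finset.mul_sum, mul_assoc, zero_smul, add_zero] using h

lemma second_deriv_nonpos_of_isLocalMax {g g' : ℝ → ℝ} {a c : ℝ}
    (hg : ∀ s, HasDerivAt g (g' s) s) (hg' : HasDerivAt g' c a) (hmax : IsLocalMax g a) :
    c ≤ 0 := by
  by_contra! hc
  have hd : deriv g = g' := funext fun s => (hg s).deriv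
  have h0 : g' a = 0 := hmax.hasDerivAt_eq_zero (hg a)
  have hmin : IsLocalMin g a := isLocalMin_of_deriv_deriv_pos
    (by rw [hd, hg'.deriv]; exact hc) (by rw [hd, h0]) (hg a).continuousAt
  have hconst : g =ᶠ[nhds a] fun _ => g a := by
    filter_upwards [hmin, hmax] with s h1 h2 using le_antisymm h2 h1
  have h1 : g' =ᶠ[nhds a] fun _ => 0 := by
    have := hconst.deriv
    rw [hd] at this
    simpa using this
  have := h1.deriv_eq
  rw [hg'.deriv] at this
  simp at this
  exact hc.ne' this

lemma deriv_nonneg_of_le_left {g : ℝ → ℝ} {d t : ℝ} (ht : 0 < t) (hg : HasDerivAt g d t)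
    (hle : ∀ s ∈ Icc 0 t, g s ≤ g t) : 0 ≤ d := by
  have h := (hasDerivWithinAt_iff_tendsto_slope' (s := Iio t) (by simp)).1
    (hg.hasDerivWithinAt (s := Iio t))
  refine ge_of_tendsto h ?_
  have : Ioo 0 t ∈ nhdsWithin t (Iio t) := Ioo_mem_nhdsLT ht
  filter_upwards [this] with s hs
  rw [slope_def_field]
  exact div_nonneg_of_nonpos (sub_nonpos.2 (hle s ⟨hs.1.le, hs.2.le⟩)) (sub_nonpos.2 hs.2.le)

lemma sum_reflection_quadratic {n : ℕ} (e : Fin n → ℝ) (he : ∑ j, e j ^ 2 = 1)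
    (H : Fin n → Fin n → ℝ) :
    ∑ j, ∑ k, ∑ l, ((if k = j then 1 else 0) - 2 * e j * e k) *
      ((if l = j then 1 else 0) - 2 * e j * e l) * H k l = ∑ j, H j j := by
  rw [Finset.sum_comm]
  refine Finset.sum_congr rfl fun k _ => ?_
  rw [Finset.sum_comm]
  have key : ∀ l, ∑ j, ((if k = j then (1 : ℝ) else 0) - 2 * e j * e k) *
      ((if l = j then 1 else 0) - 2 * e j * e l) * H k l = (if k = l then 1 else 0) * H k l := by
    intro l
    rw [← Finset.sum_mul]
    congr 1
    have : ∀ j, ((if k = j then (1 : ℝ) else 0) - 2 * e j * e k) *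
      ((if l = j then 1 else 0) - 2 * e j * e l) =
        (if k = j then (if l = j then 1 else 0) - 2 * e j * e l else 0)
        - (if l = j then 2 * e j * e k else 0) + 4 * e k * e l * e j ^ 2 := by
      intro j
      split_ifs <;> ring
    simp only [this, Finset.sum_add_distrib, Finset.sum_sub_distrib, ← Finset.mul_sum, he,
      Finset.sum_ite_eq, Finset.mem_univ, if_true]
    simp only [eq_comm (a := l)]
    ring
  simp [key]

lemma norm_add_smul_single_sq {n : ℕ} (x : E n) (s : ℝ) (j : Fin n) :
    ‖x + s • EuclideanSpace.single j (1 : ℝ)‖ ^ 2 = ‖x‖ ^ 2 + 2 * s * x j + s ^ 2 := by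
  rw [norm_add_sq_real, real_inner_smul_right, norm_smul, mul_pow, Real.norm_eq_abs, sq_abs]
  simp [EuclideanSpace.inner_single_right]
  ring

lemma abs_apply_le_norm {n : ℕ} (x : E n) (j : Fin n) : |x j| ≤ ‖x‖ := by
  simpa using PiLp.norm_apply_le x j

lemma hasDerivAt_norm_line {n : ℕ} {z : E n} (hz : z ≠ 0) (ξ : E n) :
    HasDerivAt (fun s : ℝ => ‖z + s • ξ‖) (inner ℝ z ξ / ‖z‖) 0 := by
  have hline : HasDerivAt (fun s : ℝ => z + s • ξ) ξ 0 := by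
    simpa using ((hasDerivAt_id (0 : ℝ)).smul_const ξ).const_add z
  have h := hline.norm_sq.sqrt (by simpa using hz)
  have hn : ‖z‖ ≠ 0 := norm_ne_zero_iff.2 hz
  simp only [Real.sqrt_sq (norm_nonneg _)] at h
  convert h using 1
  simp
  field_simp

lemma hasDerivAt_quadratic (A B s : ℝ) :
    HasDerivAt (fun s : ℝ => A + 2 * s * B + s ^ 2) (2 * B + 2 * s) s := by
  have h := ((((hasDerivAt_id s).const_mul 2).mul_const B).const_add A).add
    ((hasDerivAt_id s).pow 2)
  refine (h.congr_of_eventuallyEq (Filter.Eventually.of_forall fun t => by simp)).congr_deriv ?_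
  simp

/-- The doubled-variable comparison function `f x - f y - (a r - b r²) - c (1 + |x|²)`
with `r = |x - y|`. -/
def doubled {n : ℕ} (f : E n → ℝ) (a b c : ℝ) (x y : E n) : ℝ :=
  f x - f y - a * ‖x - y‖ + b * ‖x - y‖ ^ 2 - c * (1 + ‖x‖ ^ 2)

lemma isLocalMax_doubled_line {n : ℕ} {f : E n → ℝ} {a b c : ℝ} {x y : E n}
    (hmax : IsLocalMax (fun p : E n × E n => doubled f a b c p.1 p.2) (x, y)) (ξ η : E n) :
    IsLocalMax (fun s : ℝ => doubled f a b c (x + s • ξ) (y + s • η)) 0 := by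
  have hcont : ContinuousAt (fun s : ℝ => (x + s • ξ, y + s • η)) 0 := by fun_prop
  have hmax' : IsLocalMax (fun p : E n × E n => doubled f a b c p.1 p.2)
      ((fun s : ℝ => (x + s • ξ, y + s • η)) 0) := by simpa using hmax
  exact IsLocalMax.comp_continuous (g := fun s : ℝ => (x + s • ξ, y + s • η)) hmax' hcont

lemma pd_left_of_isLocalMax_doubled {n : ℕ} {f : E n → ℝ} (hf : Differentiable ℝ f)
    {a b c : ℝ} {x y : E n} (hxy : x ≠ y)
    (hmax : IsLocalMax (fun p : E n × E n => doubled f a b c p.1 p.2) (x, y)) (j : Fin n) :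
    pd f j x = (a - 2 * b * ‖x - y‖) * ((x j - y j) / ‖x - y‖) + 2 * c * x j := by
  have hl := isLocalMax_doubled_line hmax (EuclideanSpace.single j 1) 0
  have h1 := hasDerivAt_line hf x (EuclideanSpace.single j 1) 0
  have h2 := hasDerivAt_norm_line (sub_ne_zero.2 hxy) (EuclideanSpace.single j (1 : ℝ))
  have h3 : HasDerivAt (fun s : ℝ => ‖x‖ ^ 2 + 2 * s * x j + s ^ 2) (2 * x j) 0 := by
    simpa using hasDerivAt_quadratic (‖x‖ ^ 2) (x j) 0
  have hg := (((h1.sub_const (f y)).sub (h2.const_mul a)).add ((h2.pow 2).const_mul b)).sub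
    ((h3.const_add 1).const_mul c)
  have hz := hl.hasDerivAt_eq_zero (hg.congr_of_eventuallyEq (Filter.Eventually.of_forall
    fun s => by
      simp only [doubled, smul_zero, add_zero, norm_add_smul_single_sq, Pi.sub_apply,
        Pi.add_apply, Pi.pow_apply, add_sub_right_comm]))
  simp [EuclideanSpace.inner_single_right] at hz
  linear_combination hz

lemma pd_right_of_isLocalMax_doubled {n : ℕ} {f : E n → ℝ} (hf : Differentiable ℝ f)
    {a b c : ℝ} {x y : E n} (hxy : x ≠ y)
    (hmax : IsLocalMax (fun p : E n × E n => doubled f a b c p.1 p.2) (x, y)) (j : Fin n) :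
    pd f j y = (a - 2 * b * ‖x - y‖) * ((x j - y j) / ‖x - y‖) := by
  have hl := isLocalMax_doubled_line hmax 0 (EuclideanSpace.single j 1)
  have h1 := hasDerivAt_line hf y (EuclideanSpace.single j 1) 0
  have h2 := hasDerivAt_norm_line (sub_ne_zero.2 hxy) (-EuclideanSpace.single j (1 : ℝ))
  have hg := (((h1.const_sub (f x)).sub (h2.const_mul a)).add ((h2.pow 2).const_mul b)).sub_const
    (c * (1 + ‖x‖ ^ 2))
  have hz := hl.hasDerivAt_eq_zero (hg.congr_of_eventuallyEq (Filter.Eventually.of_forall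
    fun s => by
      have : x - (y + s • EuclideanSpace.single j (1 : ℝ)) =
        x - y + s • -EuclideanSpace.single j (1 : ℝ) := by rw [smul_neg]; abel
      simp only [doubled, smul_zero, add_zero, Pi.sub_apply,
        Pi.add_apply, Pi.pow_apply, this]))
  simp [EuclideanSpace.inner_single_right] at hz
  linear_combination -hz

lemma laplacian_le_of_isLocalMax_doubled {n : ℕ} {f : E n → ℝ} (hf : Differentiable ℝ f)
    (hf' : ∀ j, Differentiable ℝ (pd f j))
    {a b c : ℝ} {x y : E n} (hxy : x ≠ y)
    (hmax : IsLocalMax (fun p : E n × E n => doubled f a b c p.1 p.2) (x, y)) :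
    ∑ j, pd (pd f j) j x - ∑ j, pd (pd f j) j y ≤ -8 * b + 2 * n * c := by
  set r := ‖x - y‖ with hrdef
  have hr : 0 < r := norm_pos_iff.2 (sub_ne_zero.2 hxy)
  set e : E n := r⁻¹ • (x - y) with he
  have hne : ‖e‖ = 1 := by
    rw [he, norm_smul, norm_inv, Real.norm_of_nonneg hr.le, ← hrdef, inv_mul_cancel₀ hr.ne']
  have hxye : x - y = r • e := by rw [he, smul_inv_smul₀ hr.ne']
  have hsum : ∑ j, e j ^ 2 = 1 := by
    rw [← EuclideanSpace.real_norm_sq_eq, hne, one_pow]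
  let η : Fin n → E n := fun j => EuclideanSpace.single j 1 - (2 * e j) • e
  have key : ∀ j, pd (pd f j) j x - ∑ k, ∑ l, η j k * η j l * pd (pd f k) l y
      + 8 * b * e j ^ 2 - 2 * c ≤ 0 := by
    intro j
    have hl := isLocalMax_doubled_line hmax (EuclideanSpace.single j 1) (η j)
    let q : ℝ → ℝ := fun s => r + s * (2 * e j)
    have hq : ∀ s, HasDerivAt q (2 * e j) s := fun s => by
      have := ((hasDerivAt_id s).mul_const (2 * e j)).const_add r
      rwa [one_mul] at this
    have hp := hasDerivAt_quadratic (‖x‖ ^ 2) (x j)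
    have hp' : HasDerivAt (fun s : ℝ => 2 * x j + 2 * s) 2 0 := by
      simpa using ((hasDerivAt_id (0 : ℝ)).const_mul 2).const_add (2 * x j)
    have hev : (fun s : ℝ => doubled f a b c (x + s • EuclideanSpace.single j 1) (y + s • η j))
        =ᶠ[nhds 0] fun s => f (x + s • EuclideanSpace.single j 1) - f (y + s • η j) - a * q s
          + b * q s ^ 2 - c * (1 + (‖x‖ ^ 2 + 2 * s * x j + s ^ 2)) := by
      have hpos : ∀ᶠ s in nhds 0, 0 < q s :=
        (hq 0).continuousAt.eventually_const_lt (by simpa [q] using hr)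
      filter_upwards [hpos] with s hs
      have hz : x + s • EuclideanSpace.single j (1 : ℝ) - (y + s • η j) = q s • e := by
        have : x + s • EuclideanSpace.single j (1 : ℝ) - (y + s • η j) =
          (x - y) + s • ((2 * e j) • e) := by simp only [η, smul_sub]; abel
        rw [this, hxye, ← mul_smul s, ← add_smul]
      simp only [doubled, hz, norm_add_smul_single_sq, norm_smul, hne,
        Real.norm_of_nonneg hs.le, mul_one]
    have hl' := hl.congr hev
    have hg := fun s => ((((hasDerivAt_line hf x (EuclideanSpace.single j 1) s).sub
      (hasDerivAt_line hf y (η j) s)).sub ((hq s).const_mul a)).add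
      (((hq s).pow 2).const_mul b)).sub (((hp s).const_add 1).const_mul c)
    have hg' := ((((hasDerivAt_line_deriv hf' x (EuclideanSpace.single j 1)).sub
      (hasDerivAt_line_deriv hf' y (η j))).sub_const (a * (2 * e j))).add
      (((hq 0).mul_const (2 * (2 * e j))).const_mul b)).sub (hp'.const_mul c)
    have := second_deriv_nonpos_of_isLocalMax (g := fun s => f (x + s • EuclideanSpace.single j 1)
          - f (y + s • η j) - a * q s
          + b * q s ^ 2 - c * (1 + (‖x‖ ^ 2 + 2 * s * x j + s ^ 2))) hg
          (hg'.congr_of_eventuallyEq (Filter.Eventually.of_forall fun s => by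
            simp only [Pi.sub_apply, Pi.add_apply]; push_cast; ring)) hl'
    simp at this
    linarith
  have htot := Finset.sum_nonpos fun j (_ : j ∈ Finset.univ) => key j
  have hη : ∀ j k, η j k = (if k = j then 1 else 0) - 2 * e j * e k := fun j k => by
    simp [η]
  have hrefl := sum_reflection_quadratic (fun j => e j) hsum fun k l => pd (pd f k) l y
  simp only [← hη] at hrefl
  simp only [Finset.sum_sub_distrib, Finset.sum_add_distrib, ← Finset.mul_sum, hsum, hrefl,
    Finset.sum_const, Finset.card_univ, Fintype.card_fin, nsmul_eq_mul] at htot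
  linarith

lemma abs_sum_mul_le {n : ℕ} {p q : Fin n → ℝ} {P Q : ℝ} (hP : 0 ≤ P) (hp : ∀ j, |p j| ≤ P)
    (hq : ∀ j, |q j| ≤ Q) : |∑ j, p j * q j| ≤ n * P * Q := by
  calc |∑ j, p j * q j| ≤ ∑ j, |p j * q j| := Finset.abs_sum_le_sum_abs _ _
    _ ≤ ∑ _j : Fin n, P * Q := Finset.sum_le_sum fun j _ => by
        rw [abs_mul]
        exact mul_le_mul (hp j) (hq j) (abs_nonneg _) hP
    _ = n * P * Q := by simp [mul_assoc]

lemma IsBurgersSolution.hasDerivAt_time {n : ℕ} {ν : ℝ} {h : Fin n → E n → ℝ}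
    {u : Fin n → ℝ → E n → ℝ} (hu : IsBurgersSolution n ν h u) (i : Fin n) (x : E n) {t : ℝ}
    (ht : 0 < t) : HasDerivAt (fun s => u i s x)
      (ν * ∑ j, pd (pd (u i t) j) j x - ∑ j, u j t x * pd (u i t) j x) t := by
  rw [← hu.2.2.2.1 i x t ht]
  exact (hu.2.1 i x t ht).hasDerivAt

/-- No interior maximum of the doubled-variable comparison function, by the reflection
coupling in the viscous term. -/
lemma not_isLocalMax_doubled {n : ℕ} {ν : ℝ} (hν : 0 < ν) {h : Fin n → E n → ℝ}
    {u : Fin n → ℝ → E n → ℝ} (hu : IsBurgersSolution n ν h u) {M : ℝ} (hM : 0 < M)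
    (hb : ∀ i, ∀ t ∈ Ici (0 : ℝ), ∀ x, |u i t x| ≤ M) {τ R ε t : ℝ} (hτ : 0 < τ) (hR : 0 < R)
    (hc : R ^ 2 / τ + 4 * n * M * R < 8 * ν) (hε : 0 < ε) (ht : 0 < t) (i : Fin n) {x y : E n}
    (hxy : x ≠ y) (hxyR : ‖x - y‖ < R)
    (hspace : IsLocalMax (fun p : E n × E n => doubled (u i t) (4 * M / R) (2 * M / R ^ 2)
      (ε * Real.exp ((2 * n * ν + n * M) * t)) p.1 p.2) (x, y))
    (htime : ∀ s ∈ Icc 0 t,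
      doubled (u i s) (4 * M / R) (2 * M / R ^ 2)
        (ε * Real.exp ((2 * n * ν + n * M) * s)) x y - 2 * M * (1 - s / τ) ≤
      doubled (u i t) (4 * M / R) (2 * M / R ^ 2)
        (ε * Real.exp ((2 * n * ν + n * M) * t)) x y - 2 * M * (1 - t / τ)) : False := by
  obtain ⟨hf, hf'⟩ := hu.2.2.1 i t ht.le
  set a := 4 * M / R with ha
  set b := 2 * M / R ^ 2 with hb_def
  set Λ := 2 * n * ν + n * M with hΛ
  set c := ε * Real.exp (Λ * t) with hc_def
  set r := ‖x - y‖ with hr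
  have hcpos : 0 < c := by positivity
  have hlap := laplacian_le_of_isLocalMax_doubled hf (fun j => (hf' j).1) hxy hspace
  have hx := pd_left_of_isLocalMax_doubled hf hxy hspace
  have hy := pd_right_of_isLocalMax_doubled hf hxy hspace
  have hexp : HasDerivAt (fun s => ε * Real.exp (Λ * s)) (c * Λ) t := by
    have := (((hasDerivAt_id t).const_mul Λ).exp).const_mul ε
    refine this.congr_deriv ?_
    simp [hc_def]
    ring
  have hlin : HasDerivAt (fun s => 2 * M * (1 - s / τ)) (2 * M * (-(1 / τ))) t :=
    (((hasDerivAt_id t).div_const τ).const_sub 1).const_mul (2 * M)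
  have hd := deriv_nonneg_of_le_left ht (((((((hu.hasDerivAt_time i x ht).sub
    (hu.hasDerivAt_time i y ht)).sub_const (a * r)).add_const (b * r ^ 2)).sub
    (hexp.mul_const (1 + ‖x‖ ^ 2))).sub hlin)) htime
  have hrpos : 0 < r := norm_pos_iff.2 (sub_ne_zero.2 hxy)
  have hg0 : 0 ≤ a - 2 * b * r := by
    have : a - 2 * b * r = 4 * M / R ^ 2 * (R - r) := by
      rw [ha, hb_def]; field_simp; ring
    rw [this]
    have := sub_pos.2 hxyR
    positivity
  have hga : a - 2 * b * r ≤ a := by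
    have : 0 ≤ b * r := by positivity
    linarith
  have hdrift : -∑ j, u j t x * pd (u i t) j x + ∑ j, u j t y * pd (u i t) j y =
      (a - 2 * b * r) * ∑ j, (u j t y - u j t x) * ((x j - y j) / r)
        - 2 * c * ∑ j, u j t x * x j := by
    simp only [hx, hy, Finset.mul_sum, ← Finset.sum_neg_distrib, ← Finset.sum_add_distrib,
      ← Finset.sum_sub_distrib]
    exact Finset.sum_congr rfl fun j _ => by ring
  have hd1 : |∑ j, (u j t y - u j t x) * ((x j - y j) / r)| ≤ n * (2 * M) * 1 :=
    abs_sum_mul_le (by positivity)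
      (fun j => (abs_sub _ _).trans (by linarith [hb j t ht.le x, hb j t ht.le y]))
      (fun j => by
        rw [abs_div, abs_of_pos hrpos]
        exact div_le_one_of_le₀ (abs_apply_le_norm (x - y) j) hrpos.le)
  have hd2 : |∑ j, u j t x * x j| ≤ n * M * ‖x‖ :=
    abs_sum_mul_le hM.le (fun j => hb j t ht.le x) (abs_apply_le_norm x)
  have hn : (0 : ℝ) ≤ n := Nat.cast_nonneg n
  have h1 : (a - 2 * b * r) * ∑ j, (u j t y - u j t x) * ((x j - y j) / r) ≤
      a * (n * (2 * M) * 1) :=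
    (mul_le_mul_of_nonneg_left (le_of_abs_le hd1) hg0).trans
      (mul_le_mul_of_nonneg_right hga (by positivity))
  have h2 : -(2 * c * ∑ j, u j t x * x j) ≤ 2 * c * (n * M * ‖x‖) := by
    rw [← mul_neg]
    exact mul_le_mul_of_nonneg_left (neg_le.1 (neg_le_of_abs_le hd2)) (by positivity)
  have h3 : ν * (∑ j, pd (pd (u i t) j) j x - ∑ j, pd (pd (u i t) j) j y) ≤
      ν * (-8 * b + 2 * n * c) := mul_le_mul_of_nonneg_left hlap hν.le
  have h4 : 0 ≤ c * (Λ * (1 + ‖x‖ ^ 2) - 2 * n * ν - 2 * (n * M * ‖x‖)) := by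
    have : Λ * (1 + ‖x‖ ^ 2) - 2 * n * ν - 2 * (n * M * ‖x‖) =
        2 * n * ν * ‖x‖ ^ 2 + n * M * (1 - ‖x‖) ^ 2 := by rw [hΛ]; ring
    rw [this]
    positivity
  have h5 : 2 * M / τ + a * (n * (2 * M) * 1) - 8 * ν * b < 0 := by
    have : 2 * M / τ + a * (n * (2 * M) * 1) - 8 * ν * b =
        2 * M / R ^ 2 * (R ^ 2 / τ + 4 * n * M * R - 8 * ν) := by
      rw [ha, hb_def]; field_simp
    rw [this]
    exact mul_neg_of_pos_of_neg (by positivity) (by linarith)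
  have h6 : 2 * M * -(1 / τ) = -(2 * M / τ) := by ring
  rw [h6] at hd
  linarith

lemma sub_le_of_doubled {n : ℕ} {ν : ℝ} (hν : 0 < ν) {h : Fin n → E n → ℝ}
    {u : Fin n → ℝ → E n → ℝ} (hu : IsBurgersSolution n ν h u) {M : ℝ} (hM : 0 < M)
    (hb : ∀ i, ∀ t ∈ Ici (0 : ℝ), ∀ x, |u i t x| ≤ M) {τ R ε : ℝ} (hτ : 0 < τ) (hR : 0 < R)
    (hc : R ^ 2 / τ + 4 * n * M * R < 8 * ν) (hε : 0 < ε) (i : Fin n) {x y : E n}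
    (hxyR : ‖x - y‖ ≤ R) :
    doubled (u i τ) (4 * M / R) (2 * M / R ^ 2)
      (ε * Real.exp ((2 * n * ν + n * M) * τ)) x y ≤ 0 := by
  by_contra! hpos
  set Λ := 2 * n * ν + n * M with hΛ
  set ρ := 2 * M / ε with hρ
  let Φ : ℝ × E n × E n → ℝ := fun q => doubled (u i q.1) (4 * M / R) (2 * M / R ^ 2)
      (ε * Real.exp (Λ * q.1)) q.2.1 q.2.2 - 2 * M * (1 - q.1 / τ)
  have hΛ0 : 0 ≤ Λ := by positivity
  have hε_le : ∀ t : ℝ, 0 ≤ t → ε ≤ ε * Real.exp (Λ * t) := fun t ht =>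
    le_mul_of_one_le_right hε.le (Real.one_le_exp (by positivity))
  have hdiff : ∀ t : ℝ, 0 ≤ t → ∀ x y, u i t x - u i t y ≤ 2 * M := fun t ht x y => by
    linarith [le_of_abs_le (hb i t ht x), neg_le_of_abs_le (hb i t ht y)]
  have hG : ∀ r : ℝ, 4 * M / R * r - 2 * M / R ^ 2 * r ^ 2 = 2 * M - 2 * M / R ^ 2 * (R - r) ^ 2 :=
    fun r => by field_simp; ring
  have hG0 : ∀ r : ℝ, 0 ≤ r → r ≤ R → 0 ≤ 4 * M / R * r - 2 * M / R ^ 2 * r ^ 2 := by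
    intro r hr hrR
    have : 4 * M / R * r - 2 * M / R ^ 2 * r ^ 2 = 2 * M / R ^ 2 * (r * (2 * R - r)) := by
      field_simp; ring
    rw [this]
    have : 0 ≤ 2 * R - r := by linarith
    positivity
  have hfar : ∀ t ∈ Icc 0 τ, ∀ x y : E n, ‖x - y‖ ≤ R → 0 < Φ (t, x, y) → ‖x‖ < ρ := by
    intro t ht x y hxy h0
    by_contra! hle
    have h1 : t / τ ≤ 1 := div_le_one_of_le₀ ht.2 hτ.le
    have h2 : 0 ≤ 2 * M * (1 - t / τ) := mul_nonneg (by positivity) (by linarith)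
    have h3 : ε * (1 + ‖x‖ ^ 2) ≤ ε * Real.exp (Λ * t) * (1 + ‖x‖ ^ 2) :=
      mul_le_mul_of_nonneg_right (hε_le t ht.1) (by positivity)
    have h4 : 2 * M ≤ ε * (1 + ‖x‖ ^ 2) := by
      rw [hρ, div_le_iff₀ hε] at hle
      nlinarith [sq_nonneg (‖x‖ - 1), norm_nonneg x]
    have h5 := hG0 _ (norm_nonneg (x - y)) hxy
    have h6 := hdiff t ht.1 x y
    simp only [Φ, doubled] at h0
    linarith
  let K : Set (ℝ × E n × E n) := (Icc 0 τ ×ˢ (Metric.closedBall 0 ρ ×ˢ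
    Metric.closedBall 0 (ρ + R))) ∩ {q | ‖q.2.1 - q.2.2‖ ≤ R}
  have hK : IsCompact K := (isCompact_Icc.prod ((isCompact_closedBall _ _).prod
    (isCompact_closedBall _ _))).inter_right (isClosed_le (by fun_prop) (by fun_prop))
  have hmem : ∀ t ∈ Icc 0 τ, ∀ x y : E n, ‖x‖ ≤ ρ → ‖x - y‖ ≤ R → (t, x, y) ∈ K := by
    intro t ht x y hx hxy
    refine ⟨⟨ht, by simpa using hx, ?_⟩, hxy⟩
    have := norm_sub_norm_le y x
    rw [norm_sub_rev] at this
    simp only [mem_closedBall_zero_iff]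
    linarith
  have hcont : ContinuousOn Φ K := by
    have hux : ContinuousOn (fun q : ℝ × E n × E n => u i q.1 q.2.1) K :=
      (hu.1 i).comp (f := fun q : ℝ × E n × E n => (q.1, q.2.1)) (by fun_prop)
        fun q hq => ⟨hq.1.1.1, mem_univ _⟩
    have huy : ContinuousOn (fun q : ℝ × E n × E n => u i q.1 q.2.2) K :=
      (hu.1 i).comp (f := fun q : ℝ × E n × E n => (q.1, q.2.2)) (by fun_prop)
        fun q hq => ⟨hq.1.1.1, mem_univ _⟩
    have hrest : Continuous fun q : ℝ × E n × E n => 4 * M / R * ‖q.2.1 - q.2.2‖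
        - 2 * M / R ^ 2 * ‖q.2.1 - q.2.2‖ ^ 2
        + ε * Real.exp (Λ * q.1) * (1 + ‖q.2.1‖ ^ 2) + 2 * M * (1 - q.1 / τ) := by
      fun_prop
    refine ((hux.sub huy).sub hrest.continuousOn).congr fun q _ => ?_
    simp only [Φ, doubled, Pi.sub_apply]
    ring
  have hpos' : 0 < Φ (τ, x, y) := by
    simp only [Φ, div_self hτ.ne']
    linarith
  have hτmem : τ ∈ Icc 0 τ := ⟨hτ.le, le_rfl⟩
  have hxyK := hmem τ hτmem x y (hfar τ hτmem x y hxyR hpos').le hxyR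
  obtain ⟨⟨t₀, x₀, y₀⟩, hq₀, hmax⟩ := hK.exists_isMaxOn ⟨_, hxyK⟩ hcont
  have hΦ₀ : 0 < Φ (t₀, x₀, y₀) := hpos'.trans_le (hmax hxyK)
  have ht₀ : t₀ ∈ Icc 0 τ := hq₀.1.1
  have hr₀ : ‖x₀ - y₀‖ ≤ R := hq₀.2
  have hx₀ := hfar t₀ ht₀ x₀ y₀ hr₀ hΦ₀
  have hle1 : 0 ≤ 2 * M * (1 - t₀ / τ) :=
    mul_nonneg (by positivity) (by linarith [div_le_one_of_le₀ ht₀.2 hτ.le])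
  have hpen : 0 < ε * Real.exp (Λ * t₀) * (1 + ‖x₀‖ ^ 2) := by positivity
  have hdiff₀ := hdiff t₀ ht₀.1 x₀ y₀
  have hG₀ := hG0 _ (norm_nonneg (x₀ - y₀)) hr₀
  have htpos : 0 < t₀ := by
    refine ht₀.1.lt_of_ne fun h0 => ?_
    simp only [Φ, doubled, ← h0, zero_div] at hΦ₀
    simp only [← h0] at hpen hdiff₀
    linarith
  have hne : x₀ ≠ y₀ := by
    intro h0
    simp [Φ, doubled, h0] at hΦ₀
    rw [h0] at hpen
    linarith
  have hlt : ‖x₀ - y₀‖ < R := by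
    refine hr₀.lt_of_ne fun h0 => ?_
    have := hG ‖x₀ - y₀‖
    simp only [Φ, doubled] at hΦ₀
    rw [h0] at this hΦ₀
    simp only [sub_self, zero_pow two_ne_zero, mul_zero, sub_zero] at this
    linarith
  refine not_isLocalMax_doubled hν hu hM hb hτ hR hc hε htpos i hne hlt ?_ ?_
  · have hopen : IsOpen {p : E n × E n | ‖p.1‖ < ρ ∧ ‖p.1 - p.2‖ < R} :=
      IsOpen.and (isOpen_lt (by fun_prop) (by fun_prop)) (isOpen_lt (by fun_prop) (by fun_prop))
    filter_upwards [hopen.mem_nhds (show (x₀, y₀) ∈ _ from ⟨hx₀, hlt⟩)] with p hp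
    have := hmax (hmem t₀ ht₀ p.1 p.2 hp.1.le hp.2.le)
    simp only [mem_ofPred_eq, Φ] at this
    linarith
  · intro s hs
    exact hmax (hmem s ⟨hs.1, hs.2.trans ht₀.2⟩ x₀ y₀ hx₀.le hr₀)

lemma sub_le_mul_norm {n : ℕ} {ν : ℝ} (hν : 0 < ν) {h : Fin n → E n → ℝ}
    {u : Fin n → ℝ → E n → ℝ} (hu : IsBurgersSolution n ν h u) {M : ℝ} (hM : 0 < M)
    (hb : ∀ i, ∀ t ∈ Ici (0 : ℝ), ∀ x, |u i t x| ≤ M) {τ R : ℝ} (hτ : 0 < τ) (hR : 0 < R)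
    (hc : R ^ 2 / τ + 4 * n * M * R < 8 * ν) (i : Fin n) {x y : E n}
    (hxyR : ‖x - y‖ ≤ R) : u i τ x - u i τ y ≤ 4 * M / R * ‖x - y‖ := by
  refine le_of_forall_pos_le_add fun δ hδ => ?_
  set A := Real.exp ((2 * n * ν + n * M) * τ) * (1 + ‖x‖ ^ 2) with hA
  have hApos : 0 < A := by positivity
  have h1 := sub_le_of_doubled hν hu hM hb hτ hR hc (div_pos hδ hApos) i hxyR
  have h2 : δ / A * Real.exp ((2 * n * ν + n * M) * τ) * (1 + ‖x‖ ^ 2) = δ := by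
    rw [mul_assoc, ← hA, div_mul_cancel₀ _ hApos.ne']
  simp only [doubled, h2] at h1
  have : 0 ≤ 2 * M / R ^ 2 * ‖x - y‖ ^ 2 := by positivity
  linarith

lemma abs_pd_le_of_local {n : ℕ} {f : E n → ℝ} (hf : Differentiable ℝ f) {L R : ℝ} (hR : 0 < R)
    (hL : ∀ x y, ‖x - y‖ ≤ R → f x - f y ≤ L * ‖x - y‖) (j : Fin n) (x : E n) :
    |pd f j x| ≤ L := by
  have hL0 : 0 ≤ L := by
    have h1 : ‖R • EuclideanSpace.single j (1 : ℝ)‖ = R := by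
      simp [norm_smul, abs_of_pos hR]
    have h2 := hL (R • EuclideanSpace.single j (1 : ℝ)) 0 (by simp [h1])
    have h3 := hL 0 (R • EuclideanSpace.single j (1 : ℝ)) (by simp [h1])
    rw [sub_zero, h1] at h2
    rw [zero_sub, norm_neg, h1] at h3
    by_contra! hneg
    nlinarith
  have hnorm : ‖fderiv ℝ f x‖ ≤ L := by
    refine (hf x).hasFDerivAt.le_of_lip' hL0 ?_
    filter_upwards [Metric.closedBall_mem_nhds x hR] with y hy
    rw [mem_closedBall_iff_norm] at hy
    rw [Real.norm_eq_abs, abs_le]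
    have h2 := hL x y (by rwa [norm_sub_rev])
    rw [norm_sub_rev] at h2
    constructor <;> linarith [hL y x hy]
  calc |pd f j x| ≤ ‖fderiv ℝ f x‖ * ‖EuclideanSpace.single j (1 : ℝ)‖ :=
        (fderiv ℝ f x).le_opNorm _
    _ ≤ L := by simpa using hnorm

/-- Interior gradient bound for bounded solutions, with a singularity integrable in time. -/
lemma exists_abs_pd_le_div_sqrt {n : ℕ} {ν : ℝ} (hν : 0 < ν) {h : Fin n → E n → ℝ}
    {u : Fin n → ℝ → E n → ℝ} (hu : IsBurgersSolution n ν h u) {M : ℝ} (hM : 0 < M)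
    (hb : ∀ i, ∀ t ∈ Ici (0 : ℝ), ∀ x, |u i t x| ≤ M) (T : ℝ) :
    ∃ κ > 0, ∀ i j, ∀ t ∈ Ioc 0 T, ∀ x, |pd (u i t) j x| ≤ κ / Real.sqrt t := by
  obtain ⟨c, hc0, hc⟩ : ∃ c > 0, c ^ 2 + 4 * n * M * (c * Real.sqrt T) < 8 * ν := by
    have hcont : Continuous fun c : ℝ => c ^ 2 + 4 * n * M * (c * Real.sqrt T) := by fun_prop
    have hev := (hcont.tendsto 0).eventually_lt_const (u := 8 * ν) (by simpa using hν)
    obtain ⟨c, h1, h2⟩ := ((hev.filter_mono nhdsWithin_le_nhds).and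
      (self_mem_nhdsWithin (s := Ioi (0 : ℝ)))).exists
    exact ⟨c, h2, h1⟩
  refine ⟨4 * M / c, by positivity, fun i j t ht x => ?_⟩
  have hs : 0 < Real.sqrt t := Real.sqrt_pos.2 ht.1
  have hcond : (c * Real.sqrt t) ^ 2 / t + 4 * n * M * (c * Real.sqrt t) < 8 * ν := by
    rw [mul_pow, Real.sq_sqrt ht.1.le, mul_div_cancel_right₀ _ ht.1.ne']
    refine lt_of_le_of_lt ?_ hc
    gcongr
    exact ht.2
  rw [div_div]
  exact abs_pd_le_of_local (hu.2.2.1 i t ht.1.le).1 (by positivity)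
    (fun x y hxy => sub_le_mul_norm hν hu hM hb ht.1 (by positivity) hcond i hxy) j x

/-- No interior maximum of the weighted difference of two solutions. -/
lemma not_isLocalMax_weighted_sub {n : ℕ} {ν : ℝ} (hν : 0 < ν) {h : Fin n → E n → ℝ}
    {v1 v2 : Fin n → ℝ → E n → ℝ} (h1 : IsBurgersSolution n ν h v1)
    (h2 : IsBurgersSolution n ν h v2) {M : ℝ} (hM : 0 < M)
    {κ ε t σ : ℝ} (hε : 0 < ε) (ht : 0 < t) (hσ : |σ| = 1) (i : Fin n)
    {x : E n} (hb : ∀ i, |v1 i t x| ≤ M)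
    (hκ : ∀ j, |pd (v2 i t) j x| ≤ κ / Real.sqrt t) {θ : ℝ → ℝ} (hθ : 0 < θ t)
    (hθ' : HasDerivAt θ (-(n * κ / Real.sqrt t + (2 * n * ν + n * M)) * θ t) t)
    (hle : ∀ j, |v1 j t x - v2 j t x| ≤ σ * (v1 i t x - v2 i t x))
    (hpos : ε * (1 + ‖x‖ ^ 2) < σ * (v1 i t x - v2 i t x) * θ t)
    (hspace : IsLocalMax (fun y => σ * (v1 i t y - v2 i t y) * θ t - ε * (1 + ‖y‖ ^ 2)) x)
    (htime : ∀ s ∈ Icc 0 t,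
      σ * (v1 i s x - v2 i s x) * θ s ≤ σ * (v1 i t x - v2 i t x) * θ t) : False := by
  obtain ⟨hf, hf'⟩ := h1.2.2.1 i t ht.le
  obtain ⟨hg, hg'⟩ := h2.2.2.1 i t ht.le
  set m := σ * (v1 i t x - v2 i t x) with hm
  have hn : (0 : ℝ) ≤ n := Nat.cast_nonneg n
  have hline : ∀ j, IsLocalMax (fun s : ℝ =>
      σ * (v1 i t (x + s • EuclideanSpace.single j 1) - v2 i t (x + s • EuclideanSpace.single j 1))
        * θ t - ε * (1 + (‖x‖ ^ 2 + 2 * s * x j + s ^ 2))) 0 := by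
    intro j
    have hcont : ContinuousAt (fun s : ℝ => x + s • EuclideanSpace.single j (1 : ℝ)) 0 := by
      fun_prop
    have hmax : IsLocalMax (fun y => σ * (v1 i t y - v2 i t y) * θ t - ε * (1 + ‖y‖ ^ 2))
      ((fun s : ℝ => x + s • EuclideanSpace.single j (1 : ℝ)) 0) := by simpa using hspace
    have := IsLocalMax.comp_continuous
      (g := fun s : ℝ => x + s • EuclideanSpace.single j (1 : ℝ)) hmax hcont
    simpa only [Function.comp_def, norm_add_smul_single_sq] using this
  have hd := fun j s => (((((hasDerivAt_line hf x (EuclideanSpace.single j 1) s).sub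
    (hasDerivAt_line hg x (EuclideanSpace.single j 1) s)).const_mul σ).mul_const (θ t)).sub
    (((hasDerivAt_quadratic (‖x‖ ^ 2) (x j) s).const_add 1).const_mul ε))
  have hgrad : ∀ j, σ * θ t * (pd (v1 i t) j x - pd (v2 i t) j x) = 2 * ε * x j := by
    intro j
    have := (hline j).hasDerivAt_eq_zero (hd j 0)
    simp at this
    linear_combination this
  have hlap : ∀ j, σ * θ t * (pd (pd (v1 i t) j) j x - pd (pd (v2 i t) j) j x) ≤ 2 * ε := by
    intro j
    have hp' : HasDerivAt (fun s : ℝ => 2 * x j + 2 * s) 2 0 := by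
      simpa using ((hasDerivAt_id (0 : ℝ)).const_mul 2).const_add (2 * x j)
    have hdd := ((((hasDerivAt_line_deriv (fun j => (hf' j).1) x (EuclideanSpace.single j 1)).sub
      (hasDerivAt_line_deriv (fun j => (hg' j).1) x (EuclideanSpace.single j 1))).const_mul
      σ).mul_const (θ t)).sub (hp'.const_mul ε)
    have := second_deriv_nonpos_of_isLocalMax (hd j) hdd (hline j)
    simp at this
    linarith
  have hdt := deriv_nonneg_of_le_left ht ((((h1.hasDerivAt_time i x ht).sub
    (h2.hasDerivAt_time i x ht)).const_mul σ).mul hθ') htime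
  have hdrift : σ * θ t * (-∑ j, v1 j t x * pd (v1 i t) j x + ∑ j, v2 j t x * pd (v2 i t) j x) =
      -(2 * ε * ∑ j, v1 j t x * x j)
        - θ t * (σ * ∑ j, (v1 j t x - v2 j t x) * pd (v2 i t) j x) := by
    have : ∀ j, v1 j t x * (2 * ε * x j) =
        v1 j t x * (σ * θ t * (pd (v1 i t) j x - pd (v2 i t) j x)) := fun j => by rw [hgrad]
    have h2 : 2 * ε * ∑ j, v1 j t x * x j = ∑ j, v1 j t x * (2 * ε * x j) := by
      rw [Finset.mul_sum]
      exact Finset.sum_congr rfl fun j _ => by ring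
    rw [h2]
    simp only [this, Finset.mul_sum, ← Finset.sum_neg_distrib, ← Finset.sum_add_distrib,
      ← Finset.sum_sub_distrib]
    exact Finset.sum_congr rfl fun j _ => by ring
  have hm0 : 0 ≤ m := (abs_nonneg _).trans (hle i)
  have hb1 : -(2 * ε * ∑ j, v1 j t x * x j) ≤ 2 * ε * (n * M * ‖x‖) := by
    rw [← mul_neg]
    exact mul_le_mul_of_nonneg_left (neg_le.1 (neg_le_of_abs_le
      (abs_sum_mul_le hM.le hb (abs_apply_le_norm x)))) (by positivity)
  have hb2 : -(θ t * (σ * ∑ j, (v1 j t x - v2 j t x) * pd (v2 i t) j x)) ≤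
      θ t * (n * m * (κ / Real.sqrt t)) := by
    rw [← mul_neg]
    refine mul_le_mul_of_nonneg_left (neg_le.1 (neg_le_of_abs_le ?_)) hθ.le
    rw [abs_mul, hσ, one_mul]
    exact abs_sum_mul_le hm0 hle hκ
  have hb3 : σ * θ t * (∑ j, pd (pd (v1 i t) j) j x - ∑ j, pd (pd (v2 i t) j) j x) ≤
      n * (2 * ε) := by
    rw [← Finset.sum_sub_distrib, Finset.mul_sum]
    calc _ ≤ ∑ _j : Fin n, 2 * ε := Finset.sum_le_sum fun j _ => hlap j
      _ = _ := by simp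
  have hb4 := mul_le_mul_of_nonneg_left hb3 hν.le
  have hn1 : (1 : ℝ) ≤ n := by exact_mod_cast Fin.pos i
  have hb5 : (2 * n * ν + n * M) * (ε * (1 + ‖x‖ ^ 2)) < (2 * n * ν + n * M) * (m * θ t) :=
    mul_lt_mul_of_pos_left hpos (by positivity)
  have hb6 : 0 ≤ ε * (2 * n * ν * ‖x‖ ^ 2 + n * M * (1 - ‖x‖) ^ 2) := by positivity
  simp only [Pi.sub_apply] at hdt
  rw [← hm] at hdt
  have e1 : n * κ / Real.sqrt t = n * (κ / Real.sqrt t) := mul_div_assoc _ _ _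
  rw [e1] at hdt
  nlinarith

lemma abs_sub_mul_weight_le {n : ℕ} {ν : ℝ} (hν : 0 < ν) {h : Fin n → E n → ℝ}
    {v1 v2 : Fin n → ℝ → E n → ℝ} (h1 : IsBurgersSolution n ν h v1)
    (h2 : IsBurgersSolution n ν h v2) {M : ℝ} (hM : 0 < M)
    (hb1 : ∀ i, ∀ t ∈ Ici (0 : ℝ), ∀ x, |v1 i t x| ≤ M)
    (hb2 : ∀ i, ∀ t ∈ Ici (0 : ℝ), ∀ x, |v2 i t x| ≤ M) {κ ε T : ℝ} (hκ0 : 0 < κ)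
    (hκ : ∀ i j, ∀ t ∈ Ioc 0 T, ∀ x, |pd (v2 i t) j x| ≤ κ / Real.sqrt t) (hT : 0 ≤ T)
    (hε : 0 < ε) (i : Fin n) (x : E n) :
    |v1 i T x - v2 i T x| *
      Real.exp (-(2 * n * κ * Real.sqrt T + (2 * n * ν + n * M) * T)) ≤ ε * (1 + ‖x‖ ^ 2) := by
  by_contra! hneg
  set Λ := 2 * n * ν + n * M with hΛ
  let θ : ℝ → ℝ := fun t => Real.exp (-(2 * n * κ * Real.sqrt t + Λ * t))
  have hΛ0 : 0 ≤ Λ := by positivity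
  have hθ1 : ∀ t, 0 ≤ t → θ t ≤ 1 := fun t ht =>
    Real.exp_le_one_iff.2 (neg_nonpos.2 (by positivity))
  let Φ : Fin n → ℝ × E n → ℝ := fun k q =>
    |v1 k q.1 q.2 - v2 k q.1 q.2| * θ q.1 - ε * (1 + ‖q.2‖ ^ 2)
  set ρ := 2 * M / ε with hρ
  have hfar : ∀ k, ∀ t : ℝ, 0 ≤ t → ∀ y : E n, 0 < Φ k (t, y) → ‖y‖ < ρ := by
    intro k t ht y h0
    by_contra! hle
    have e1 : |v1 k t y - v2 k t y| ≤ 2 * M :=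
      (abs_sub _ _).trans (by linarith [hb1 k t ht y, hb2 k t ht y])
    have e2 : |v1 k t y - v2 k t y| * θ t ≤ 2 * M :=
      (mul_le_of_le_one_right (abs_nonneg _) (hθ1 t ht)).trans e1
    rw [hρ, div_le_iff₀ hε] at hle
    simp only [Φ] at h0
    nlinarith [sq_nonneg (‖y‖ - 1), norm_nonneg y]
  let K : Set (ℝ × E n) := Icc 0 T ×ˢ Metric.closedBall 0 ρ
  have hK : IsCompact K := isCompact_Icc.prod (isCompact_closedBall _ _)
  have hcont : ∀ k, ContinuousOn (Φ k) K := by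
    intro k
    have hsub : K ⊆ Ici 0 ×ˢ univ := fun q hq => ⟨hq.1.1, mem_univ _⟩
    have hw := (((h1.1 k).mono hsub).sub ((h2.1 k).mono hsub)).abs
    have hθc : Continuous fun q : ℝ × E n => θ q.1 := by fun_prop
    have hpen : Continuous fun q : ℝ × E n => ε * (1 + ‖q.2‖ ^ 2) := by fun_prop
    exact (hw.mul hθc.continuousOn).sub hpen.continuousOn
  have hpos' : 0 < Φ i (T, x) := sub_pos.2 hneg
  have hxK : (T, x) ∈ K := ⟨⟨hT, le_rfl⟩, by simpa using (hfar i T hT x hpos').le⟩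
  choose q hqK hqmax using fun k => hK.exists_isMaxOn ⟨_, hxK⟩ (hcont k)
  have : Nonempty (Fin n) := ⟨i⟩
  obtain ⟨k, hk⟩ := Finite.exists_max fun k => Φ k (q k)
  have hall : ∀ l, ∀ p ∈ K, Φ l p ≤ Φ k (q k) := fun l p hp => (hqmax l hp).trans (hk l)
  have hkK := hqK k
  generalize q k = p₀ at hall hkK
  obtain ⟨t₀, x₀⟩ := p₀
  have hΦ₀ : 0 < Φ k (t₀, x₀) := hpos'.trans_le (hall i _ hxK)
  have ht₀ : t₀ ∈ Icc 0 T := hkK.1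
  have hx₀ := hfar k t₀ ht₀.1 x₀ hΦ₀
  have htpos : 0 < t₀ := by
    refine ht₀.1.lt_of_ne fun h0 => ?_
    simp only [Φ, ← h0, h1.2.2.2.2, h2.2.2.2.2, sub_self, abs_zero, zero_mul] at hΦ₀
    have : 0 < ε * (1 + ‖x₀‖ ^ 2) := by positivity
    linarith
  obtain ⟨σ, hσ, hσw⟩ : ∃ σ : ℝ, |σ| = 1 ∧
      |v1 k t₀ x₀ - v2 k t₀ x₀| = σ * (v1 k t₀ x₀ - v2 k t₀ x₀) := by
    rcases abs_choice (v1 k t₀ x₀ - v2 k t₀ x₀) with h0 | h0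
    · exact ⟨1, by simp, by rw [h0, one_mul]⟩
    · exact ⟨-1, by simp, by rw [h0, neg_one_mul]⟩
  have hσle : ∀ s y, σ * (v1 k s y - v2 k s y) ≤ |v1 k s y - v2 k s y| := fun s y =>
    (le_abs_self _).trans (by rw [abs_mul, hσ, one_mul])
  have hθpos : ∀ t, 0 < θ t := fun t => Real.exp_pos _
  have hθ' : HasDerivAt θ (-(n * κ / Real.sqrt t₀ + Λ) * θ t₀) t₀ := by
    have := ((((Real.hasDerivAt_sqrt htpos.ne').const_mul (2 * n * κ)).add
      ((hasDerivAt_id t₀).const_mul Λ)).neg).exp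
    refine this.congr_deriv ?_
    have hs : Real.sqrt t₀ ≠ 0 := (Real.sqrt_pos.2 htpos).ne'
    simp only [θ, Pi.neg_apply, Pi.add_apply, id]
    field_simp
  refine not_isLocalMax_weighted_sub hν h1 h2 hM hε htpos hσ k (fun l => hb1 l t₀ ht₀.1 x₀)
    (fun j => hκ k j t₀ ⟨htpos, ht₀.2⟩ x₀) (hθpos t₀) hθ' ?_ ?_ ?_ ?_
  · intro j
    have := hall j (t₀, x₀) hkK
    simp only [Φ] at this
    rw [← hσw]
    exact le_of_mul_le_mul_right (by linarith) (hθpos t₀)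
  · rw [← hσw]
    exact sub_pos.1 hΦ₀
  · have hopen : IsOpen {y : E n | ‖y‖ < ρ} := isOpen_lt (by fun_prop) (by fun_prop)
    filter_upwards [hopen.mem_nhds hx₀] with y hy
    have := hall k (t₀, y) ⟨ht₀, by simpa using (le_of_lt hy)⟩
    simp only [Φ] at this
    rw [← hσw]
    linarith [mul_le_mul_of_nonneg_right (hσle t₀ y) (hθpos t₀).le]
  · intro s hs
    have := hall k (s, x₀) ⟨⟨hs.1, hs.2.trans ht₀.2⟩, hkK.2⟩
    simp only [Φ] at this
    rw [← hσw]
    linarith [mul_le_mul_of_nonneg_right (hσle s x₀) (hθpos s).le]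

/-- Uniqueness: two globally bounded, parabolically Hölder continuous classical
solutions of the Cauchy problem for the multivariate viscous Burgers system with the
same smooth bounded initial data coincide. -/
theorem statement_1 (n : ℕ) (hn : 1 ≤ n) (ν : ℝ) (hν : 0 < ν)
    (h : Fin n → E n → ℝ)
    (hsm : ∀ i, ContDiff ℝ (⊤ : ℕ∞) (h i))
    (hbd : ∃ M : ℝ, ∀ i x, |h i x| ≤ M)
    (v1 v2 : Fin n → ℝ → E n → ℝ)
    (h1 : IsBurgersSolution n ν h v1) (h1b : GloballyBounded n v1)
    (h1H : ParabolicHolder n v1)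
    (h2 : IsBurgersSolution n ν h v2) (h2b : GloballyBounded n v2)
    (h2H : ParabolicHolder n v2) :
    ∀ i, ∀ t ∈ Ici (0:ℝ), ∀ x, v1 i t x = v2 i t x := by
  intro i T hT x
  obtain ⟨M1, hM1⟩ := h1b
  obtain ⟨M2, hM2⟩ := h2b
  set M := max 1 (max M1 M2)
  have hM : 0 < M := zero_lt_one.trans_le (le_max_left _ _)
  have hb1 : ∀ i, ∀ t ∈ Ici (0 : ℝ), ∀ x, |v1 i t x| ≤ M := fun i t ht x =>
    (hM1 i t ht x).trans ((le_max_left _ _).trans (le_max_right _ _))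
  have hb2 : ∀ i, ∀ t ∈ Ici (0 : ℝ), ∀ x, |v2 i t x| ≤ M := fun i t ht x =>
    (hM2 i t ht x).trans ((le_max_right _ _).trans (le_max_right _ _))
  obtain ⟨κ, hκ0, hκ⟩ := exists_abs_pd_le_div_sqrt hν h2 hM hb2 T
  have hweight : |v1 i T x - v2 i T x| *
      Real.exp (-(2 * n * κ * Real.sqrt T + (2 * n * ν + n * M) * T)) ≤ 0 := by
    refine le_of_forall_pos_le_add fun δ hδ => ?_
    have hx : 0 < 1 + ‖x‖ ^ 2 := by positivity
    have := abs_sub_mul_weight_le hν h1 h2 hM hb1 hb2 hκ0 hκ hT (div_pos hδ hx) i x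
    rwa [div_mul_cancel₀ _ hx.ne', ← zero_add δ] at this
  have hzero : |v1 i T x - v2 i T x| ≤ 0 :=
    le_of_mul_le_mul_right (by simpa using hweight) (Real.exp_pos _)
  exact sub_eq_zero.1 (abs_nonpos_iff.1 hzero)
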